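/- Let f̃_1, f̃_2: D([0,T]; ℝ^d) → ℝ both be pathwise Malliavin differentiable, with f̃_i and each map ω ↦ 𝔻_t f̃_i(ω) continuous with respect to the uniform norm, and with 𝔻f̃_i having left limits and boundedness preserving (i = 1, 2). If f̃_1(ω) = f̃_2(ω) for every continuous ω, then for every continuous path ω ∈ C([0,T]; ℝ^d) one has 𝔻_t f̃_1(ω) = 𝔻_t f̃_2(ω) for Lebesgue-almost every t ∈ [0,T]. Consequently, the pathwise Malliavin derivative of a functional on continuous paths defined through any such extension to càdlàg paths is, on continuous paths, independent of the chosen extension up to a Lebesgue-null set of times. -/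

import Mathlib

open MeasureTheory Filter Set

noncomputable section

/-- `ω : ℝ → ℝ^d` is càdlàg on `[0,T]`: right-continuous at every `t ∈ [0,T)` (within `[0,T]`)
and with left limits (within `[0,T]`) at every `t ∈ (0,T]`. -/
def CadlagOn (T : ℝ) {d : ℕ} (ω : ℝ → Fin d → ℝ) : Prop :=
  (∀ t ∈ Set.Ico (0 : ℝ) T, Tendsto ω (nhdsWithin t (Set.Ioc t T)) (nhds (ω t))) ∧
  (∀ t ∈ Set.Ioc (0 : ℝ) T, ∃ l : Fin d → ℝ, Tendsto ω (nhdsWithin t (Set.Ico 0 t)) (nhds l))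

/-- The bump path `e·1_{[t,T]}`. -/
def bump (T : ℝ) {d : ℕ} (t : ℝ) (e : Fin d → ℝ) : ℝ → Fin d → ℝ :=
  Set.indicator (Set.Icc t T) (fun _ => e)

/-- `f` is pathwise Malliavin differentiable on `D([0,T]; ℝ^d)` with derivative `Df`:
for every càdlàg `ω`, every `t ∈ [0,T]` and every `e ∈ ℝ^d`,
`(f(ω + ε e 1_{[t,T]}) − f(ω))/ε → ⟨Df ω t, e⟩` as `ε → 0`. -/
def HasPathwiseMalliavinDeriv (T : ℝ) {d : ℕ} (f : (ℝ → Fin d → ℝ) → ℝ)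
    (Df : (ℝ → Fin d → ℝ) → ℝ → Fin d → ℝ) : Prop :=
  ∀ ω : ℝ → Fin d → ℝ, CadlagOn T ω → ∀ t ∈ Set.Icc (0 : ℝ) T, ∀ e : Fin d → ℝ,
    Tendsto (fun ε : ℝ => (f (ω + ε • bump T t e) - f ω) / ε)
      (nhdsWithin 0 {(0 : ℝ)}ᶜ) (nhds (∑ i, Df ω t i * e i))

/-- Continuity of a real functional on càdlàg paths with respect to the uniform norm on `[0,T]`
(sequential formulation). -/
def UnifContOnCadlag (T : ℝ) {d : ℕ} (f : (ℝ → Fin d → ℝ) → ℝ) : Prop :=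
  ∀ (ω : ℝ → Fin d → ℝ) (ωs : ℕ → ℝ → Fin d → ℝ),
    CadlagOn T ω → (∀ n, CadlagOn T (ωs n)) →
    TendstoUniformlyOn ωs ω atTop (Set.Icc 0 T) →
    Tendsto (fun n => f (ωs n)) atTop (nhds (f ω))

/-- Continuity of an `ℝ^d`-valued functional on càdlàg paths with respect to the uniform norm
on `[0,T]` (sequential formulation). -/
def UnifContOnCadlagVec (T : ℝ) {d : ℕ} (F : (ℝ → Fin d → ℝ) → Fin d → ℝ) : Prop :=
  ∀ (ω : ℝ → Fin d → ℝ) (ωs : ℕ → ℝ → Fin d → ℝ),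
    CadlagOn T ω → (∀ n, CadlagOn T (ωs n)) →
    TendstoUniformlyOn ωs ω atTop (Set.Icc 0 T) →
    Tendsto (fun n => F (ωs n)) atTop (nhds (F ω))

/-- `F : [0,T] × D([0,T];ℝ^d) → ℝ^d` has left limits: whenever `ω^n → ω` uniformly on `[0,T]`
and `t^n ↑ t` with `t^n < t`, `F(t^n, ω^n)` converges to a limit depending only on `(t, ω)`. -/
def HasLeftLimits (T : ℝ) {d : ℕ} (F : (ℝ → Fin d → ℝ) → ℝ → Fin d → ℝ) : Prop :=
  ∀ ω : ℝ → Fin d → ℝ, CadlagOn T ω → ∀ t ∈ Set.Ioc (0 : ℝ) T, ∃ l : Fin d → ℝ,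
    ∀ (ωs : ℕ → ℝ → Fin d → ℝ) (ts : ℕ → ℝ),
      (∀ n, CadlagOn T (ωs n)) →
      TendstoUniformlyOn ωs ω atTop (Set.Icc 0 T) →
      (∀ n, ts n < t) → Monotone ts → Tendsto ts atTop (nhds t) →
      Tendsto (fun n => F (ωs n) (ts n)) atTop (nhds l)

/-- `F` is boundedness preserving: `sup_{t ∈ [0,T]} sup_{‖ω‖_∞ < K} |F(t, ω)| < ∞` for every
`K > 0`. -/
def BoundednessPreserving (T : ℝ) {d : ℕ} (F : (ℝ → Fin d → ℝ) → ℝ → Fin d → ℝ) : Prop :=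
  ∀ K : ℝ, 0 < K → ∃ M : ℝ,
    ∀ ω : ℝ → Fin d → ℝ, CadlagOn T ω → (∀ s ∈ Set.Icc (0 : ℝ) T, ‖ω s‖ < K) →
      ∀ t ∈ Set.Icc (0 : ℝ) T, ‖F ω t‖ ≤ M

end

/-!
The difference `g = f₁ - f₂` vanishes on continuous paths. Let `l` be the left limit of its
derivative `Dg` at a time `t` and a continuous path `ω`. If `c < ⟨l, e⟩`, then `c < ⟨Dg, e⟩` on a
time interval `(t - δ, t)` and on a uniform neighbourhood of `ω`. For small `ε`, adding `ε e` to `ω`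
by a staircase of bumps during `[a, b] ⊆ (t - δ, t)` increases `g` by at least `ε c`, by the mean
value inequality on each jump. Refining the staircase gives the same bound for a continuous ramp,
along which `g` stays `0`; hence `c ≤ 0`. So `⟨l, e⟩ ≤ 0` for every `e`, and `l = 0`. A function all
of whose left limits are `0` is nonzero only on a countable set, because the times where its norm
exceeds a given positive level are isolated from the left.
-/

open scoped Topology

section LeftLimits

theorem exists_monotone_subseq_of_tendsto_of_lt {α : Type*} [LinearOrder α] [TopologicalSpace α]
    [ClosedIicTopology α] {t : α} {u : ℕ → α} (hu : ∀ n, u n < t) (hlim : Tendsto u atTop (𝓝 t)) :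
    ∃ φ : ℕ → ℕ, StrictMono φ ∧ Monotone (u ∘ φ) := by
  obtain ⟨φ, hinc | hdec⟩ := exists_increasing_or_nonincreasing_subseq (· ≤ ·) u
  · exact ⟨φ, φ.strictMono, monotone_nat_of_le_succ fun n => hinc n (n + 1) n.lt_succ_self⟩
  · have hle : t ≤ u (φ 0) := by
      refine le_of_tendsto (hlim.comp φ.strictMono.tendsto_atTop) ?_
      filter_upwards [eventually_gt_atTop 0] with n hn
      exact (not_le.1 (hdec 0 n hn)).le
    exact absurd (hu _) hle.not_gt

theorem countable_setOf_ne_of_tendsto_nhdsLT {α E : Type*} [LinearOrder α] [TopologicalSpace α]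
    [OrderTopology α] [SecondCountableTopology α] [TopologicalSpace E] [T1Space E]
    [FirstCountableTopology E] {h : α → E} {y : E} {S : Set α}
    (hlim : ∀ t ∈ S, Tendsto h (𝓝[<] t) (𝓝 y)) : {t ∈ S | h t ≠ y}.Countable := by
  obtain ⟨V, hV⟩ := (𝓝 y).exists_antitone_basis
  have hsub : {t ∈ S | h t ≠ y} ⊆ ⋃ n, {t ∈ S | h t ∉ V n} := by
    rintro t ⟨htS, hty⟩
    obtain ⟨n, hn⟩ := hV.mem_iff.1 (compl_singleton_mem_nhds hty.symm)
    exact mem_iUnion.2 ⟨n, htS, fun htV => hn htV rfl⟩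
  refine (countable_iUnion fun n => ?_).mono hsub
  refine (countable_setOfPred_isolated_left_within (s := {t ∈ S | h t ∉ V n})).mono
    fun t ht => ?_
  refine ⟨ht, empty_mem_iff_bot.1 ?_⟩
  filter_upwards [nhdsWithin_mono t inter_subset_right ((hlim t ht.1).eventually (hV.mem n)),
    self_mem_nhdsWithin] with s hsV hs
  exact hs.1.2 hsV

end LeftLimits

section Paths

variable {T : ℝ} {d : ℕ} {ω η : ℝ → Fin d → ℝ}

theorem CadlagOn.add (hω : CadlagOn T ω) (hη : CadlagOn T η) : CadlagOn T (ω + η) := by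
  refine ⟨fun t ht => (hω.1 t ht).add (hη.1 t ht), fun t ht => ?_⟩
  obtain ⟨l, hl⟩ := hω.2 t ht
  obtain ⟨m, hm⟩ := hη.2 t ht
  exact ⟨l + m, hl.add hm⟩

theorem CadlagOn.const_smul (hω : CadlagOn T ω) (c : ℝ) : CadlagOn T (c • ω) := by
  refine ⟨fun t ht => (hω.1 t ht).const_smul c, fun t ht => ?_⟩
  obtain ⟨l, hl⟩ := hω.2 t ht
  exact ⟨c • l, hl.const_smul c⟩

theorem CadlagOn.of_continuousOn (hω : ContinuousOn ω (Icc 0 T)) : CadlagOn T ω :=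
  ⟨fun t ht => (hω t (Ico_subset_Icc_self ht)).mono_left
      (nhdsWithin_mono t fun _ hx => ⟨ht.1.trans hx.1.le, hx.2⟩),
    fun t ht => ⟨ω t, (hω t (Ioc_subset_Icc_self ht)).mono_left
      (nhdsWithin_mono t fun _ hx => ⟨hx.1, hx.2.le.trans ht.2⟩)⟩⟩

theorem cadlagOn_bump (T s : ℝ) (e : Fin d → ℝ) : CadlagOn T (bump T s e) := by
  refine ⟨fun t ht => tendsto_nhds_of_eventually_eq ?_, fun t ht => ?_⟩
  · rcases le_or_gt s t with hst | hts
    · filter_upwards [self_mem_nhdsWithin] with x hx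
      rw [bump, indicator_of_mem (mem_Icc.2 ⟨hst.trans hx.1.le, hx.2⟩),
        indicator_of_mem (mem_Icc.2 ⟨hst, ht.2.le⟩)]
    · filter_upwards [nhdsWithin_le_nhds (Iio_mem_nhds hts)] with x hx
      rw [bump, indicator_of_notMem fun h => h.1.not_gt hx,
        indicator_of_notMem fun h => h.1.not_gt hts]
  · rcases lt_or_ge s t with hst | hts
    · refine ⟨e, tendsto_nhds_of_eventually_eq ?_⟩
      filter_upwards [self_mem_nhdsWithin, nhdsWithin_le_nhds (Ioi_mem_nhds hst)] with x hx hsx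
      rw [bump, indicator_of_mem (mem_Icc.2 ⟨le_of_lt hsx, hx.2.le.trans ht.2⟩)]
    · refine ⟨0, tendsto_nhds_of_eventually_eq ?_⟩
      filter_upwards [self_mem_nhdsWithin] with x hx
      rw [bump, indicator_of_notMem fun h => h.1.not_gt (hx.2.trans_le hts)]

/-- The closed ball of radius `R` around `ω` in `D([0,T]; ℝ^d)` with the uniform norm. As paths are
functions on `ℝ`, only their values on `[0,T]` are compared. -/
def cadlagClosedBall (T : ℝ) {d : ℕ} (ω : ℝ → Fin d → ℝ) (R : ℝ) : Set (ℝ → Fin d → ℝ) :=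
  {η | CadlagOn T η ∧ ∀ u ∈ Icc 0 T, ‖η u - ω u‖ ≤ R}

theorem self_mem_cadlagClosedBall (hω : CadlagOn T ω) {R : ℝ} (hR : 0 ≤ R) :
    ω ∈ cadlagClosedBall T ω R :=
  ⟨hω, fun u _ => by rwa [sub_self, norm_zero]⟩

theorem cadlagClosedBall_subset_cadlagClosedBall {R R' : ℝ} (h : R ≤ R') :
    cadlagClosedBall T ω R ⊆ cadlagClosedBall T ω R' :=
  fun _ hη => ⟨hη.1, fun u hu => (hη.2 u hu).trans h⟩

theorem add_smul_bump_mem_cadlagClosedBall {R : ℝ} (hη : η ∈ cadlagClosedBall T ω R) (x s : ℝ)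
    (e : Fin d → ℝ) : η + x • bump T s e ∈ cadlagClosedBall T ω (R + |x| * ‖e‖) := by
  refine ⟨hη.1.add ((cadlagOn_bump T s e).const_smul x), fun u hu => ?_⟩
  have hbump : ‖x • bump T s e u‖ ≤ |x| * ‖e‖ := by
    rw [norm_smul, Real.norm_eq_abs]
    gcongr
    exact norm_indicator_le_norm_self (fun _ => e) u
  rw [Pi.add_apply, Pi.smul_apply, add_sub_right_comm]
  exact norm_add_le_of_le (hη.2 u hu) hbump

theorem add_sum_smul_bump_mem_cadlagClosedBall (hω : CadlagOn T ω) {ι : Type*} (A : Finset ι)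
    (r s : ι → ℝ) (e : Fin d → ℝ) :
    ω + ∑ i ∈ A, r i • bump T (s i) e ∈ cadlagClosedBall T ω ((∑ i ∈ A, |r i|) * ‖e‖) := by
  induction A using Finset.cons_induction with
  | empty => simpa using self_mem_cadlagClosedBall hω le_rfl
  | cons j A hj ih =>
    rw [Finset.sum_cons, Finset.sum_cons, add_comm (r j • _), ← add_assoc, add_comm |r j|, add_mul]
    exact add_smul_bump_mem_cadlagClosedBall ih _ _ _

end Paths

section Staircase

variable {T : ℝ} {d : ℕ} {a b : ℝ}

/-- The path rising linearly from `0` at time `a` to `e` at time `b`, constant elsewhere. -/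
noncomputable def ramp (a b : ℝ) (e : Fin d → ℝ) : ℝ → Fin d → ℝ :=
  fun u => (projIcc (0 : ℝ) 1 zero_le_one ((u - a) / (b - a)) : ℝ) • e

/-- The càdlàg approximation of `ramp a b e` on `[0,T]` by `n` equal jumps; the jumps occur at the
right endpoints of the subintervals of `[a, b]`, so that none of them is at `a`. -/
noncomputable def staircase (T a b : ℝ) (e : Fin d → ℝ) (n : ℕ) : ℝ → Fin d → ℝ :=
  ∑ k ∈ Finset.range n, (1 / n : ℝ) • bump T (a + (k + 1) / n * (b - a)) e

theorem continuous_ramp (a b : ℝ) (e : Fin d → ℝ) : Continuous (ramp a b e) :=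
  have hslope : Continuous fun u : ℝ => (u - a) / (b - a) := by fun_prop
  (continuous_subtype_val.comp (continuous_projIcc.comp hslope)).smul continuous_const

theorem jumpTime_mem_Ioc (hab : a < b) {n k : ℕ} (hk : k < n) :
    a + (k + 1) / n * (b - a) ∈ Ioc a b := by
  have hba : 0 < b - a := sub_pos.2 hab
  have hn : (0 : ℝ) < n := Nat.cast_pos.2 (k.zero_le.trans_lt hk)
  have hk1 : ((k : ℝ) + 1) / n ≤ 1 := (div_le_one hn).2 (by exact_mod_cast hk)
  exact ⟨lt_add_of_pos_right _ (by positivity),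
    le_sub_iff_add_le'.1 (mul_le_of_le_one_left hba.le hk1)⟩

theorem abs_floor_mul_div_sub_le {n : ℕ} (hn : 0 < n) {y : ℝ} (hy : 0 ≤ y) :
    |(⌊n * y⌋₊ : ℝ) / n - y| ≤ 1 / n := by
  have hn' : (0 : ℝ) < n := Nat.cast_pos.2 hn
  have hle : (⌊n * y⌋₊ : ℝ) ≤ n * y := Nat.floor_le (mul_nonneg hn'.le hy)
  have hlt : n * y < ⌊n * y⌋₊ + 1 := Nat.lt_floor_add_one _
  rw [div_sub' hn'.ne', abs_div, abs_of_pos hn']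
  gcongr
  exact abs_le.2 ⟨by linarith, by linarith⟩

theorem card_filter_succ_div_le_eq_floor {n : ℕ} (hn : 0 < n) {y : ℝ} (hy : y ≤ 1) :
    ((Finset.range n).filter fun k : ℕ => ((k : ℝ) + 1) / n ≤ y).card = ⌊n * y⌋₊ := by
  have hn' : (0 : ℝ) < n := Nat.cast_pos.2 hn
  have hfloor : ⌊n * y⌋₊ ≤ n := Nat.floor_le_of_le (mul_le_of_le_one_right hn'.le hy)
  have hiff (k : ℕ) : ((k : ℝ) + 1) / n ≤ y ↔ k < ⌊n * y⌋₊ := by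
    rw [div_le_iff₀' hn', ← Nat.cast_add_one, ← Nat.le_floor_iff' k.succ_ne_zero, Nat.succ_le_iff]
  have hfilter : (Finset.range n).filter (fun k : ℕ => ((k : ℝ) + 1) / n ≤ y) =
      Finset.range ⌊n * y⌋₊ := by
    ext k
    rw [Finset.mem_filter, Finset.mem_range, Finset.mem_range, hiff]
    exact and_iff_right_of_imp fun hk => hk.trans_le hfloor
  rw [hfilter, Finset.card_range]

theorem staircase_apply (hab : a < b) (e : Fin d → ℝ) {n : ℕ} (hn : 0 < n) {u : ℝ} (hu : u ≤ T) :
    staircase T a b e n u =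
      (⌊n * (projIcc (0 : ℝ) 1 zero_le_one ((u - a) / (b - a)) : ℝ)⌋₊ / n : ℝ) • e := by
  set y := projIcc (0 : ℝ) 1 zero_le_one ((u - a) / (b - a)) with hy
  have hjump : ∀ k ∈ Finset.range n,
      (u ∈ Icc (a + (k + 1) / n * (b - a)) T ↔ ((k : ℝ) + 1) / n ≤ y) := by
    intro k hk
    have hk0 : (0 : ℝ) < (k + 1) / n := by positivity
    have hk1 : ((k : ℝ) + 1) / n ≤ 1 :=
      (div_le_one (by positivity)).2 (by exact_mod_cast Finset.mem_range.1 hk)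
    rw [hy, coe_projIcc, le_max_iff, or_iff_right hk0.not_ge, le_min_iff, and_iff_right hk1,
      mem_Icc, and_iff_left hu, ← le_sub_iff_add_le', le_div_iff₀ (sub_pos.2 hab)]
  calc staircase T a b e n u
      = ∑ k ∈ Finset.range n, if ((k : ℝ) + 1) / n ≤ y then (1 / n : ℝ) • e else 0 := by
        rw [staircase, Finset.sum_apply]
        refine Finset.sum_congr rfl fun k hk => ?_
        simp only [Pi.smul_apply, bump, indicator_apply, hjump k hk, smul_ite, smul_zero]
    _ = (⌊n * (y : ℝ)⌋₊ / n : ℝ) • e := by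
        rw [← Finset.sum_filter, Finset.sum_const, card_filter_succ_div_le_eq_floor hn y.2.2,
          ← Nat.cast_smul_eq_nsmul ℝ, smul_smul, mul_one_div]

theorem norm_staircase_sub_ramp_le (hab : a < b) (e : Fin d → ℝ) {n : ℕ} (hn : 0 < n) {u : ℝ}
    (hu : u ≤ T) : ‖staircase T a b e n u - ramp a b e u‖ ≤ ‖e‖ / n := by
  set y := projIcc (0 : ℝ) 1 zero_le_one ((u - a) / (b - a))
  calc ‖staircase T a b e n u - ramp a b e u‖
      = |(⌊n * (y : ℝ)⌋₊ : ℝ) / n - y| * ‖e‖ := by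
        rw [staircase_apply hab e hn hu, ramp, ← sub_smul, norm_smul, Real.norm_eq_abs]
    _ ≤ 1 / n * ‖e‖ := by
        gcongr
        exact abs_floor_mul_div_sub_le hn y.2.1
    _ = ‖e‖ / n := one_div_mul_eq_div _ _

theorem tendstoUniformlyOn_staircase (T : ℝ) (hab : a < b) (e : Fin d → ℝ) :
    TendstoUniformlyOn (staircase T a b e) (ramp a b e) atTop (Icc 0 T) := by
  rw [Metric.tendstoUniformlyOn_iff]
  intro ε hε
  filter_upwards [(tendsto_const_div_atTop_nhds_zero_nat ‖e‖).eventually_lt_const hε,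
    eventually_gt_atTop 0] with n hnε hn u hu
  rw [dist_comm, dist_eq_norm]
  exact (norm_staircase_sub_ramp_le hab e hn hu.2).trans_lt hnε

end Staircase

section Functionals

variable {T : ℝ} {d : ℕ} {f g : (ℝ → Fin d → ℝ) → ℝ} {F Df Dg : (ℝ → Fin d → ℝ) → ℝ → Fin d → ℝ}
  {ω : ℝ → Fin d → ℝ}

theorem HasPathwiseMalliavinDeriv.sub (hf : HasPathwiseMalliavinDeriv T f Df)
    (hg : HasPathwiseMalliavinDeriv T g Dg) :
    HasPathwiseMalliavinDeriv T (f - g) (Df - Dg) := by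
  intro ω hω t ht e
  convert (hf ω hω t ht e).sub (hg ω hω t ht e) using 2
  · simp only [Pi.sub_apply]
    ring
  · exact sub_dotProduct _ _ _

theorem UnifContOnCadlag.sub (hf : UnifContOnCadlag T f) (hg : UnifContOnCadlag T g) :
    UnifContOnCadlag T (f - g) :=
  fun ω ωs hω hωs h => (hf ω ωs hω hωs h).sub (hg ω ωs hω hωs h)

theorem HasLeftLimits.sub (hDf : HasLeftLimits T Df) (hDg : HasLeftLimits T Dg) :
    HasLeftLimits T (Df - Dg) := by
  intro ω hω t ht
  obtain ⟨l, hl⟩ := hDf ω hω t ht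
  obtain ⟨m, hm⟩ := hDg ω hω t ht
  exact ⟨l - m, fun ωs ts hωs hunif hlt hmono hts =>
    (hl ωs ts hωs hunif hlt hmono hts).sub (hm ωs ts hωs hunif hlt hmono hts)⟩

/-- `l` is the left limit `F(t−, ω)`, jointly in the time and in the path. This is the `ε`-`δ` form
of the sequential condition in `HasLeftLimits`; the sequences there are monotone in time, whereas
here all earlier times close to `t` are allowed. -/
def HasLeftLimitAt (T : ℝ) {d : ℕ} (F : (ℝ → Fin d → ℝ) → ℝ → Fin d → ℝ) (ω : ℝ → Fin d → ℝ)
    (t : ℝ) (l : Fin d → ℝ) : Prop :=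
  ∀ U ∈ 𝓝 l, ∃ δ > 0, ∀ s ∈ Ioo (t - δ) t, ∀ η ∈ cadlagClosedBall T ω δ, F η s ∈ U

theorem HasLeftLimits.exists_hasLeftLimitAt (hF : HasLeftLimits T F) (hω : CadlagOn T ω) {t : ℝ}
    (ht : t ∈ Ioc 0 T) : ∃ l, HasLeftLimitAt T F ω t l := by
  obtain ⟨l, hl⟩ := hF ω hω t ht
  refine ⟨l, fun U hU => ?_⟩
  by_contra! hcon
  choose s hs η hη hnot using fun n : ℕ => hcon (1 / ((n : ℝ) + 1)) (by positivity)
  have hz : Tendsto (fun n : ℕ => 1 / ((n : ℝ) + 1)) atTop (𝓝 0) :=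
    tendsto_one_div_add_atTop_nhds_zero_nat
  have hst : Tendsto s atTop (𝓝 t) :=
    tendsto_of_tendsto_of_tendsto_of_le_of_le (by simpa using hz.const_sub t) tendsto_const_nhds
      (fun n => (hs n).1.le) fun n => (hs n).2.le
  have hunif : TendstoUniformlyOn η ω atTop (Icc 0 T) := by
    rw [Metric.tendstoUniformlyOn_iff]
    intro ε hε
    filter_upwards [hz.eventually_lt_const hε] with n hn u hu
    rw [dist_comm, dist_eq_norm]
    exact ((hη n).2 u hu).trans_lt hn
  obtain ⟨φ, hφ, hmono⟩ := exists_monotone_subseq_of_tendsto_of_lt (fun n => (hs n).2) hst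
  have hlim : Tendsto (fun n => F (η (φ n)) (s (φ n))) atTop (𝓝 l) :=
    hl (η ∘ φ) (s ∘ φ) (fun n => (hη _).1)
      (fun v hv => hφ.tendsto_atTop.eventually (hunif v hv))
      (fun n => (hs _).2) hmono (hst.comp hφ.tendsto_atTop)
  obtain ⟨n, hn⟩ := (hlim.eventually hU).exists
  exact hnot _ hn

theorem HasLeftLimitAt.tendsto {t : ℝ} {l : Fin d → ℝ} (hl : HasLeftLimitAt T F ω t l)
    (hω : CadlagOn T ω) : Tendsto (F ω) (𝓝[<] t) (𝓝 l) := by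
  refine tendsto_def.2 fun U hU => ?_
  obtain ⟨δ, hδ, hmem⟩ := hl U hU
  filter_upwards [Ioo_mem_nhdsLT (sub_lt_self t hδ)] with s hs
  exact hmem s hs ω (self_mem_cadlagClosedBall hω hδ.le)

end Functionals

namespace HasPathwiseMalliavinDeriv

variable {T : ℝ} {d : ℕ} {g : (ℝ → Fin d → ℝ) → ℝ} {Dg : (ℝ → Fin d → ℝ) → ℝ → Fin d → ℝ}
  {ω : ℝ → Fin d → ℝ}

theorem hasDerivAt_add_smul_bump (hg : HasPathwiseMalliavinDeriv T g Dg) (hω : CadlagOn T ω)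
    {s : ℝ} (hs : s ∈ Icc 0 T) (e : Fin d → ℝ) (x : ℝ) :
    HasDerivAt (fun x : ℝ => g (ω + x • bump T s e)) (Dg (ω + x • bump T s e) s ⬝ᵥ e) x := by
  rw [hasDerivAt_iff_tendsto_slope_zero]
  refine (hg _ (hω.add ((cadlagOn_bump T s e).const_smul x)) s hs e).congr fun ε => ?_
  rw [add_assoc, ← add_smul, smul_eq_mul, div_eq_inv_mul]

theorem mul_le_sub_of_smul_bump (hg : HasPathwiseMalliavinDeriv T g Dg) (hω : CadlagOn T ω)
    {s : ℝ} (hs : s ∈ Icc 0 T) {e : Fin d → ℝ} {c r : ℝ} (hr : 0 ≤ r)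
    (hc : ∀ x ∈ Icc 0 r, c ≤ Dg (ω + x • bump T s e) s ⬝ᵥ e) :
    c * r ≤ g (ω + r • bump T s e) - g ω := by
  have hder := hg.hasDerivAt_add_smul_bump hω hs e
  have hmvt := (convex_Icc 0 r).mul_sub_le_image_sub_of_le_deriv
    (fun x _ => (hder x).continuousAt.continuousWithinAt)
    (fun x _ => (hder x).differentiableAt.differentiableWithinAt)
    (fun x hx => (hder x).deriv.symm ▸ hc x (interior_subset hx))
    0 (left_mem_Icc.2 hr) r (right_mem_Icc.2 hr) hr
  simpa only [sub_zero, zero_smul, add_zero] using hmvt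

theorem mul_sum_le_sub_of_sum_smul_bump (hg : HasPathwiseMalliavinDeriv T g Dg)
    (hω : CadlagOn T ω) {ι : Type*} {A : Finset ι} {r s : ι → ℝ} {e : Fin d → ℝ} {c R : ℝ}
    (hr : ∀ i ∈ A, 0 ≤ r i) (hs : ∀ i ∈ A, s i ∈ Icc 0 T) (hR : (∑ i ∈ A, r i) * ‖e‖ ≤ R)
    (hc : ∀ i ∈ A, ∀ η ∈ cadlagClosedBall T ω R, c ≤ Dg η (s i) ⬝ᵥ e) :
    c * ∑ i ∈ A, r i ≤ g (ω + ∑ i ∈ A, r i • bump T (s i) e) - g ω := by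
  induction A using Finset.cons_induction with
  | empty => simp
  | cons j A hj ih =>
    rw [Finset.forall_mem_cons] at hr hs hc
    rw [Finset.sum_cons] at hR
    set η := ω + ∑ i ∈ A, r i • bump T (s i) e with hη_def
    have hη : η ∈ cadlagClosedBall T ω ((∑ i ∈ A, r i) * ‖e‖) := by
      rw [← Finset.sum_congr rfl fun i hi => abs_of_nonneg (hr.2 i hi)]
      exact add_sum_smul_bump_mem_cadlagClosedBall hω A r s e
    have hjump : c * r j ≤ g (η + r j • bump T (s j) e) - g η := by
      refine hg.mul_le_sub_of_smul_bump hη.1 hs.1 hr.1 fun x hx => hc.1 _ ?_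
      refine cadlagClosedBall_subset_cadlagClosedBall ?_
        (add_smul_bump_mem_cadlagClosedBall hη x (s j) e)
      rw [abs_of_nonneg hx.1]
      linarith [mul_le_mul_of_nonneg_right hx.2 (norm_nonneg e)]
    have hrest : c * ∑ i ∈ A, r i ≤ g η - g ω :=
      ih hr.2 hs.2 (by linarith [mul_nonneg hr.1 (norm_nonneg e)]) hc.2
    rw [Finset.sum_cons, Finset.sum_cons, add_comm (r j • _), ← add_assoc, ← hη_def, mul_add]
    linarith

theorem le_sub_of_ramp (hg : HasPathwiseMalliavinDeriv T g Dg) (hcont : UnifContOnCadlag T g)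
    (hω : CadlagOn T ω) {a b : ℝ} (ha : 0 ≤ a) (hab : a < b) (hb : b ≤ T) {e : Fin d → ℝ} {c : ℝ}
    (hc : ∀ s ∈ Ioc a b, ∀ η ∈ cadlagClosedBall T ω ‖e‖, c ≤ Dg η s ⬝ᵥ e) :
    c ≤ g (ω + ramp a b e) - g ω := by
  have hstair : ∀ n > 0, c ≤ g (ω + staircase T a b e n) - g ω := by
    intro n hn
    have hsum : ∑ _k ∈ Finset.range n, (1 / n : ℝ) = 1 := by
      rw [Finset.sum_const, Finset.card_range, nsmul_eq_mul, mul_one_div_cancel (by positivity)]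
    have htime (k : ℕ) (hk : k ∈ Finset.range n) := jumpTime_mem_Ioc hab (Finset.mem_range.1 hk)
    have h := hg.mul_sum_le_sub_of_sum_smul_bump hω (A := Finset.range n)
      (r := fun _ => (1 / n : ℝ)) (s := fun k => a + (k + 1) / n * (b - a)) (c := c)
      (fun _ _ => by positivity)
      (fun k hk => ⟨ha.trans (htime k hk).1.le, (htime k hk).2.trans hb⟩)
      (by rw [hsum, one_mul]) (fun k hk => hc _ (htime k hk))
    simpa only [hsum, mul_one, staircase] using h
  have hstair_cadlag (n : ℕ) : CadlagOn T (ω + staircase T a b e n) :=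
    (add_sum_smul_bump_mem_cadlagClosedBall hω _ _ _ _).1
  have hunif : TendstoUniformlyOn (fun n => ω + staircase T a b e n) (ω + ramp a b e) atTop
      (Icc 0 T) := by
    have h := tendstoUniformlyOn_staircase T hab e
    rw [Metric.tendstoUniformlyOn_iff] at h ⊢
    simpa only [Pi.add_apply, dist_add_left] using h
  have hlim := hcont _ _ (hω.add (.of_continuousOn (continuous_ramp a b e).continuousOn))
    hstair_cadlag hunif
  exact ge_of_tendsto (hlim.sub_const (g ω)) ((eventually_gt_atTop 0).mono hstair)

theorem leftLimit_dotProduct_nonpos (hg : HasPathwiseMalliavinDeriv T g Dg)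
    (hcont : UnifContOnCadlag T g) (hzero : ∀ η, ContinuousOn η (Icc 0 T) → g η = 0)
    (hω : ContinuousOn ω (Icc 0 T)) {t : ℝ} (ht : t ∈ Ioc 0 T) {l : Fin d → ℝ}
    (hl : HasLeftLimitAt T Dg ω t l) (e : Fin d → ℝ) : l ⬝ᵥ e ≤ 0 := by
  refine le_of_forall_lt_imp_le_of_dense fun c hc => ?_
  have hnhds : {v : Fin d → ℝ | c < v ⬝ᵥ e} ∈ 𝓝 l :=
    (isOpen_lt continuous_const (by fun_prop)).mem_nhds hc
  obtain ⟨δ, hδ, hderiv⟩ := hl _ hnhds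
  obtain ⟨ε, hε, hεδ⟩ := exists_pos_mul_lt hδ ‖e‖
  obtain ⟨a, ha, hat⟩ := exists_between (max_lt ht.1 (sub_lt_self t hδ))
  obtain ⟨b, hab, hbt⟩ := exists_between hat
  have hle : ε * c ≤ g (ω + ramp a b (ε • e)) - g ω := by
    refine hg.le_sub_of_ramp hcont (.of_continuousOn hω) ((le_max_left _ _).trans ha.le) hab
      (hbt.le.trans ht.2) fun s hs η hη => ?_
    have hsδ : s ∈ Ioo (t - δ) t :=
      ⟨((le_max_right _ _).trans_lt ha).trans hs.1, hs.2.trans_lt hbt⟩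
    have hball : ‖ε • e‖ ≤ δ := by
      rw [norm_smul, Real.norm_of_nonneg hε.le, mul_comm]
      exact hεδ.le
    have hcη : c < Dg η s ⬝ᵥ e :=
      hderiv s hsδ η (cadlagClosedBall_subset_cadlagClosedBall hball hη)
    rw [dotProduct_smul, smul_eq_mul]
    gcongr
  rw [hzero _ (hω.add (continuous_ramp a b _).continuousOn), hzero _ hω, sub_zero] at hle
  exact nonpos_of_mul_nonpos_right hle hε

theorem tendsto_nhdsLT_zero (hg : HasPathwiseMalliavinDeriv T g Dg)
    (hcont : UnifContOnCadlag T g) (hll : HasLeftLimits T Dg)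
    (hzero : ∀ η, ContinuousOn η (Icc 0 T) → g η = 0) (hω : ContinuousOn ω (Icc 0 T)) {t : ℝ}
    (ht : t ∈ Ioc 0 T) : Tendsto (Dg ω) (𝓝[<] t) (𝓝 0) := by
  obtain ⟨l, hl⟩ := hll.exists_hasLeftLimitAt (.of_continuousOn hω) ht
  have hself : l ⬝ᵥ l = 0 := le_antisymm (hg.leftLimit_dotProduct_nonpos hcont hzero hω ht hl l)
    (Finset.sum_nonneg fun i _ => mul_self_nonneg (l i))
  rw [← dotProduct_self_eq_zero.1 hself]
  exact hl.tendsto (.of_continuousOn hω)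

end HasPathwiseMalliavinDeriv

theorem statement_5_general (T : ℝ) {d : ℕ}
    (f₁ f₂ : (ℝ → Fin d → ℝ) → ℝ) (Df₁ Df₂ : (ℝ → Fin d → ℝ) → ℝ → Fin d → ℝ)
    (hdiff₁ : HasPathwiseMalliavinDeriv T f₁ Df₁)
    (hdiff₂ : HasPathwiseMalliavinDeriv T f₂ Df₂)
    (hfcont₁ : UnifContOnCadlag T f₁) (hfcont₂ : UnifContOnCadlag T f₂)
    (hll₁ : HasLeftLimits T Df₁) (hll₂ : HasLeftLimits T Df₂)
    (hagree : ∀ ω : ℝ → Fin d → ℝ, ContinuousOn ω (Icc 0 T) → f₁ ω = f₂ ω)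
    (ω : ℝ → Fin d → ℝ) (hω : ContinuousOn ω (Icc 0 T)) :
    {t ∈ Icc 0 T | Df₁ ω t ≠ Df₂ ω t}.Countable := by
  have hlim : ∀ t ∈ Ioc 0 T, Tendsto ((Df₁ - Df₂) ω) (𝓝[<] t) (𝓝 0) := fun t ht =>
    (hdiff₁.sub hdiff₂).tendsto_nhdsLT_zero (hfcont₁.sub hfcont₂) (hll₁.sub hll₂)
      (fun η hη => sub_eq_zero.2 (hagree η hη)) hω ht
  refine ((countable_setOf_ne_of_tendsto_nhdsLT hlim).insert 0).mono ?_
  rintro t ⟨ht, hne⟩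
  rcases ht.1.eq_or_lt with rfl | h0
  · exact mem_insert _ _
  · exact mem_insert_of_mem _ ⟨⟨h0, ht.2⟩, sub_ne_zero.2 hne⟩

/-- Let `f̃₁, f̃₂ : D([0,T];ℝ^d) → ℝ` be pathwise Malliavin differentiable,
with `f̃ᵢ` and each `ω ↦ 𝔻_t f̃ᵢ(ω)` uniformly continuous, and with `𝔻f̃ᵢ` having left limits
and boundedness preserving. If `f̃₁ = f̃₂` on continuous paths, then for every continuous path
`ω` one has `𝔻_t f̃₁(ω) = 𝔻_t f̃₂(ω)` for Lebesgue-almost every `t ∈ [0,T]`; i.e. on continuous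
paths the pathwise Malliavin derivative does not depend on the chosen càdlàg extension, up to a
Lebesgue-null set of times. -/
theorem statement_5 (T : ℝ) (hT : 0 < T) {d : ℕ}
    (f₁ f₂ : (ℝ → Fin d → ℝ) → ℝ) (Df₁ Df₂ : (ℝ → Fin d → ℝ) → ℝ → Fin d → ℝ)
    (hdiff₁ : HasPathwiseMalliavinDeriv T f₁ Df₁)
    (hdiff₂ : HasPathwiseMalliavinDeriv T f₂ Df₂)
    (hfcont₁ : UnifContOnCadlag T f₁) (hfcont₂ : UnifContOnCadlag T f₂)
    (hDcont₁ : ∀ t ∈ Set.Icc (0 : ℝ) T, UnifContOnCadlagVec T (fun ω => Df₁ ω t))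
    (hDcont₂ : ∀ t ∈ Set.Icc (0 : ℝ) T, UnifContOnCadlagVec T (fun ω => Df₂ ω t))
    (hll₁ : HasLeftLimits T Df₁) (hll₂ : HasLeftLimits T Df₂)
    (hbp₁ : BoundednessPreserving T Df₁) (hbp₂ : BoundednessPreserving T Df₂)
    (hagree : ∀ ω : ℝ → Fin d → ℝ, ContinuousOn ω (Set.Icc 0 T) → f₁ ω = f₂ ω)
    (ω : ℝ → Fin d → ℝ) (hω : ContinuousOn ω (Set.Icc 0 T)) :
    ∀ᵐ t ∂(volume.restrict (Set.Icc (0 : ℝ) T)), Df₁ ω t = Df₂ ω t := by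
  rw [ae_restrict_iff' measurableSet_Icc]
  filter_upwards [(statement_5_general T f₁ f₂ Df₁ Df₂ hdiff₁ hdiff₂ hfcont₁ hfcont₂ hll₁ hll₂
    hagree ω hω).ae_notMem volume] with t hmem ht using not_not.1 fun hne => hmem ⟨ht, hne⟩
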